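/- Let A be a right regular band, c ∈ A a central element, and I1, I2 subsemigroups of A with A = I1 ×_c I2. Then the relation x = ⟨⟨x1,x2⟩⟩_c defines a semigroup isomorphism between the direct product I1 × I2 (with componentwise multiplication) and A: there is a bijection Φ : I1 × I2 → A such that Φ(x1,x2) = x iff x = ⟨⟨x1,x2⟩⟩_c, and Φ((x1,x2)·(z1,z2)) = Φ(x1,x2)·Φ(z1,z2) for all x1, z1 ∈ I1, x2, z2 ∈ I2. -/

import Mathlib

namespace RRBFactor

variable {A : Type*} [Semigroup A]

/-- The underlying order of a right regular band: `x ≤ y ↔ x·y = x`. -/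
def rle (x y : A) : Prop := x * y = x

/-- `s` is the least upper bound of `{a, b}` with respect to the underlying
order of a right regular band. -/
def IsLub2 (a b s : A) : Prop :=
  rle a s ∧ rle b s ∧ ∀ t : A, rle a t → rle b t → rle s t

/-- `IsPair c x1 x2 x` expresses `x = ⟨⟨x1,x2⟩⟩_c`: the conjunction of
(comm), (dist), (p1), (p2) and (prod). -/
def IsPair (c x1 x2 x : A) : Prop :=
  (x * x1 = x1 * x ∧ x * x2 = x2 * x) ∧
  IsLub2 (x * x1) (x * x2) x ∧
  IsLub2 (x * x1) (c * x1) x1 ∧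
  IsLub2 (x * x2) (c * x2) x2 ∧
  x1 * x2 = x * c

/-- A subset is a subsemigroup when it is closed under multiplication. -/
def MulClosed (I : Set A) : Prop := ∀ a ∈ I, ∀ b ∈ I, a * b ∈ I

/-- `CDirect c I1 I2` expresses `A = I1 ×_c I2`: the conjunction of (Perm),
(Mod1), (Mod2), (Abs) (in both symmetric forms), (Exi) and (Onto). -/
def CDirect (c : A) (I1 I2 : Set A) : Prop :=
  -- (Perm)
  (∀ x1 ∈ I1, ∀ x2 ∈ I2, x1 * x2 = x2 * x1) ∧
  -- (Mod1)
  (∀ x y : A, ∀ x1 ∈ I1, ∀ x2 ∈ I2, rle (x * c) (x1 * x2) →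
    ∀ s : A, IsLub2 (x * x1) (x * x2) s →
      IsLub2 (x * x1 * y) (x * x2 * y) (s * y) ∧
      IsLub2 (y * x * x1) (y * x * x2) (y * s)) ∧
  -- (Mod2)
  (∀ x y : A, ∀ x1 ∈ I1, ∀ x2 ∈ I2, rle (x1 * x2) x →
    (∀ s : A, IsLub2 (x * x1) (c * x1) s →
      IsLub2 (x * x1 * y) (c * x1 * y) (s * y) ∧
      IsLub2 (y * x * x1) (y * c * x1) (y * s)) ∧
    (∀ s : A, IsLub2 (x * x2) (c * x2) s →
      IsLub2 (x * x2 * y) (c * x2 * y) (s * y) ∧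
      IsLub2 (y * x * x2) (y * c * x2) (y * s))) ∧
  -- (Abs)
  (∀ x1 ∈ I1, ∀ y1 ∈ I1, ∀ z2 ∈ I2, ∀ s : A,
      (IsLub2 x1 (y1 * z2) s ↔ IsLub2 x1 (y1 * c) s)) ∧
  (∀ x2 ∈ I2, ∀ y2 ∈ I2, ∀ z1 ∈ I1, ∀ s : A,
      (IsLub2 x2 (y2 * z1) s ↔ IsLub2 x2 (y2 * c) s)) ∧
  -- (Exi)
  (∀ x1 ∈ I1, ∀ x2 ∈ I2, ∃ x : A, IsPair c x1 x2 x) ∧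
  -- (Onto)
  (∀ x : A, ∃ x1 ∈ I1, ∃ x2 ∈ I2, IsPair c x1 x2 x)

end RRBFactor

open RRBFactor

namespace RRBFactor

section
variable {A : Type*} [Semigroup A]

theorem lub_symm {a b s : A} (h : IsLub2 a b s) : IsLub2 b a s :=
  ⟨h.2.1, h.1, fun t h1 h2 => h.2.2 t h2 h1⟩

/-- Right regular band with a central element and a decomposition. -/
structure Ctx (c : A) (I1 I2 : Subsemigroup A) : Prop where
  idem : ∀ x : A, x * x = x
  rrb : ∀ a b : A, a * b * a = b * a
  hc : ∀ x : A, c * x = x * c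
  hdp : CDirect c (I1 : Set A) (I2 : Set A)

theorem Ctx.symm {c : A} {I1 I2 : Subsemigroup A} (h : Ctx c I1 I2) : Ctx c I2 I1 := by
  obtain ⟨idem, rrb, hc, perm, mod1, mod2, abs1, abs2, exi, onto⟩ := h
  have swap : ∀ x1 ∈ I1, ∀ x2 ∈ I2, ∀ x, IsPair c x1 x2 x → IsPair c x2 x1 x := by
    rintro x1 h1 x2 h2 x ⟨⟨a, b⟩, d, e, f, g⟩
    exact ⟨⟨b, a⟩, lub_symm d, f, e, by rw [← perm x1 h1 x2 h2, g]⟩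
  refine ⟨idem, rrb, hc, fun x h1 y h2 => (perm y h2 x h1).symm, ?_, ?_, abs2, abs1, ?_, ?_⟩
  · intro x y x1 h1 x2 h2 hle s hs
    have := mod1 x y x2 h2 x1 h1 (by rw [perm x2 h2 x1 h1]; exact hle) s (lub_symm hs)
    exact ⟨lub_symm this.1, lub_symm this.2⟩
  · intro x y x1 h1 x2 h2 hle
    have := mod2 x y x2 h2 x1 h1 (by rw [perm x2 h2 x1 h1]; exact hle)
    exact ⟨this.2, this.1⟩
  · intro x1 h1 x2 h2
    obtain ⟨x, hx⟩ := exi x2 h2 x1 h1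
    exact ⟨x, swap _ h2 _ h1 _ hx⟩
  · intro x
    obtain ⟨x1, h1, x2, h2, hx⟩ := onto x
    exact ⟨x2, h2, x1, h1, swap _ h1 _ h2 _ hx⟩

variable {c : A} {I1 I2 : Subsemigroup A}

theorem Ctx.swap (h : Ctx c I1 I2) {x1 x2 x : A} (h1 : x1 ∈ I1) (h2 : x2 ∈ I2)
    (hp : IsPair c x1 x2 x) : IsPair c x2 x1 x := by
  obtain ⟨⟨a, b⟩, d, e, f, g⟩ := hp
  exact ⟨⟨b, a⟩, lub_symm d, f, e, by rw [← h.hdp.1 x1 h1 x2 h2, g]⟩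

theorem Ctx.antisymm (h : Ctx c I1 I2) {x y : A} (h1 : rle x y) (h2 : rle y x) : x = y := by
  unfold rle at *
  have := h.rrb x y
  rw [h1, h.idem, h2] at this
  exact this

theorem Ctx.trans (_h : Ctx c I1 I2) {x y z : A} (h1 : rle x y) (h2 : rle y z) : rle x z := by
  unfold rle at *
  rw [← h1, mul_assoc, h2]

theorem Ctx.uniq (h : Ctx c I1 I2) {a b s t : A} (h1 : IsLub2 a b s) (h2 : IsLub2 a b t) :
    s = t :=
  h.antisymm (h1.2.2 t h2.1 h2.2.1) (h2.2.2 s h1.1 h1.2.1)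

theorem Ctx.left (h : Ctx c I1 I2) {a b s : A} (h1 : IsLub2 a b s) (h2 : rle b a) : s = a :=
  h.antisymm (h1.2.2 a (h.idem a) h2) h1.1

/-- `u * c ≤ u`. -/
theorem Ctx.cle (h : Ctx c I1 I2) (u : A) : rle (u * c) u := by
  unfold rle
  rw [mul_assoc, h.hc, ← mul_assoc, h.idem]

theorem Ctx.mulle (h : Ctx c I1 I2) (u v : A) : rle (u * v) v := by
  unfold rle
  rw [mul_assoc, h.idem]

/-- elements of `I1 * I2` lie below `c`. -/
theorem Ctx.prodc (h : Ctx c I1 I2) {x1 x2 : A} (h1 : x1 ∈ I1) (h2 : x2 ∈ I2) :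
    x1 * x2 * c = x1 * x2 := by
  obtain ⟨x, hx⟩ := h.hdp.2.2.2.2.2.1 x1 h1 x2 h2
  rw [hx.2.2.2.2, mul_assoc, h.idem]

theorem Ctx.lub_c (_h : Ctx c I1 I2) {a b s : A} (hs : IsLub2 a b s)
    (h1 : a * c = a) (h2 : b * c = b) : s * c = s := hs.2.2 c h1 h2

/-- Multiplicativity of `u ↦ u * c`. -/
theorem Ctx.mulc (h : Ctx c I1 I2) (u v : A) : u * v * c = (u * c) * (v * c) := by
  rw [mul_assoc u c, ← mul_assoc c v, h.hc v, mul_assoc v c c, h.idem, mul_assoc]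

theorem Ctx.m1r (h : Ctx c I1 I2) {x1 x2 x : A} (h1 : x1 ∈ I1) (h2 : x2 ∈ I2)
    (hp : IsPair c x1 x2 x) (y : A) : IsLub2 (x * x1 * y) (x * x2 * y) (x * y) :=
  (h.hdp.2.1 x y x1 h1 x2 h2 (by rw [hp.2.2.2.2]; exact h.idem _) x hp.2.1).1

theorem Ctx.m1l (h : Ctx c I1 I2) {x1 x2 x : A} (h1 : x1 ∈ I1) (h2 : x2 ∈ I2)
    (hp : IsPair c x1 x2 x) (y : A) : IsLub2 (y * x * x1) (y * x * x2) (y * x) :=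
  (h.hdp.2.1 x y x1 h1 x2 h2 (by rw [hp.2.2.2.2]; exact h.idem _) x hp.2.1).2

theorem Ctx.m2r (h : Ctx c I1 I2) {x1 x2 x : A} (h1 : x1 ∈ I1) (h2 : x2 ∈ I2)
    (hp : IsPair c x1 x2 x) (y : A) : IsLub2 (x * x1 * y) (c * x1 * y) (x1 * y) :=
  ((h.hdp.2.2.1 x y x1 h1 x2 h2 (by rw [hp.2.2.2.2]; exact h.cle _)).1 x1 hp.2.2.1).1

theorem Ctx.m2l (h : Ctx c I1 I2) {x1 x2 x : A} (h1 : x1 ∈ I1) (h2 : x2 ∈ I2)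
    (hp : IsPair c x1 x2 x) (y : A) : IsLub2 (y * x * x1) (y * c * x1) (y * x1) :=
  ((h.hdp.2.2.1 x y x1 h1 x2 h2 (by rw [hp.2.2.2.2]; exact h.cle _)).1 x1 hp.2.2.1).2

/-- If `x1*x2 = y1*y2` then `x1*c = y1*c`. -/
theorem Ctx.ceq (h : Ctx c I1 I2) {x1 x2 y1 y2 : A} (h1 : x1 ∈ I1) (h2 : x2 ∈ I2)
    (k1 : y1 ∈ I1) (k2 : y2 ∈ I2) (e : x1 * x2 = y1 * y2) : x1 * c = y1 * c := by
  have key : ∀ {x1 x2 y1 y2 : A}, x1 ∈ I1 → x2 ∈ I2 → y1 ∈ I1 → y2 ∈ I2 →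
      x1 * x2 = y1 * y2 → y1 * c * x1 = y1 * c := by
    intro x1 x2 y1 y2 h1 h2 k1 k2 e
    have hl : IsLub2 x1 (y1 * y2) x1 := by
      refine ⟨h.idem _, ?_, fun t ht _ => ht⟩
      rw [← e, h.hdp.1 x1 h1 x2 h2]
      exact h.mulle _ _
    exact ((h.hdp.2.2.2.1 x1 h1 y1 k1 y2 k2 x1).1 hl).2.1
  have a := key h1 h2 k1 k2 e
  have b := key k1 k2 h1 h2 e.symm
  have r := h.rrb (x1 * c) y1
  rw [b, h.idem, ← mul_assoc] at r
  -- x1*c = y1*x1*c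
  rw [r, ← a, mul_assoc y1 c, h.hc, mul_assoc]

/-- Uniqueness of the first coordinate. -/
theorem Ctx.fst_uniq (h : Ctx c I1 I2) {x1 x2 y1 y2 x : A} (h1 : x1 ∈ I1) (h2 : x2 ∈ I2)
    (k1 : y1 ∈ I1) (k2 : y2 ∈ I2) (hx : IsPair c x1 x2 x) (hy : IsPair c y1 y2 x) :
    x1 = y1 := by
  have key : ∀ {x1 x2 y1 y2 : A}, x1 ∈ I1 → x2 ∈ I2 → y1 ∈ I1 → y2 ∈ I2 →
      IsPair c x1 x2 x → IsPair c y1 y2 x → x1 * c = y1 * c →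
      x * y1 = x * y1 * x1 := by
    intro x1 x2 y1 y2 h1 h2 k1 k2 hx hy e
    have l := h.m1l h1 h2 hx y1
    rw [← hy.1.1] at l
    refine h.left l ?_
    have e1 : x * y1 * x2 = x * y1 * x1 * c := by
      have p := h.prodc k1 h2
      have q : y1 * x2 = x * c := by
        rw [← p, h.mulc, ← e, ← h.mulc, hx.2.2.2.2, mul_assoc, h.idem]
      have q' : x * y1 * x1 * c = x * c := by
        rw [mul_assoc, e, mul_assoc, ← mul_assoc y1, h.idem, ← e]
        have : x * x1 * c = (x * c) * x1 := by rw [mul_assoc, mul_assoc, h.hc]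
        rw [← mul_assoc, this, ← hx.2.2.2.2, h.hdp.1 _ h1 _ h2, mul_assoc, h.idem]
      rw [q', mul_assoc, q, ← mul_assoc, h.idem]
    rw [e1]
    exact h.cle _
  have e : x1 * c = y1 * c := h.ceq h1 h2 k1 k2 (hx.2.2.2.2.trans hy.2.2.2.2.symm)
  have a := key h1 h2 k1 k2 hx hy e
  have b := key k1 k2 h1 h2 hy hx e.symm
  -- x y1 = x y1 x1 ≤ x1 ...
  have m : x * y1 = x * x1 := by
    apply h.antisymm
    · show x * y1 * (x * x1) = x * y1
      rw [hx.1.1, ← mul_assoc, ← a, hy.1.1, mul_assoc, h.idem]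
    · show x * x1 * (x * y1) = x * x1
      rw [hy.1.1, ← mul_assoc, ← b, hx.1.1, mul_assoc, h.idem]
  have l1 := hx.2.2.1
  have l2 := hy.2.2.1
  rw [m, h.hc, ← e, ← h.hc] at l2
  exact h.uniq l1 l2

/-- Uniqueness of the element with given coordinates: first half. -/
theorem Ctx.mul_fst_uniq (h : Ctx c I1 I2) {x1 x2 x y : A} (h1 : x1 ∈ I1) (h2 : x2 ∈ I2)
    (hx : IsPair c x1 x2 x) (hy : IsPair c x1 x2 y) : x * x1 = y * x1 := by
  have e : x * c = y * c := hx.2.2.2.2.symm.trans hy.2.2.2.2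
  have l1 := h.m2l h1 h2 hx y
  have l2 := h.m2r h1 h2 hy x
  rw [← hx.1.1] at l2
  have e1 : y * x * x1 = y * x1 * x := by rw [mul_assoc, hx.1.1, mul_assoc]
  have e2 : y * c * x1 = c * x1 * x := by
    rw [← e, mul_assoc c, ← hx.1.1, ← mul_assoc, h.hc]
  rw [e1, e2] at l1
  exact h.uniq l2 l1

theorem Ctx.uniq_pair (h : Ctx c I1 I2) {x1 x2 x y : A} (h1 : x1 ∈ I1) (h2 : x2 ∈ I2)
    (hx : IsPair c x1 x2 x) (hy : IsPair c x1 x2 y) : x = y := by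
  have a := h.mul_fst_uniq h1 h2 hx hy
  have b := h.symm.mul_fst_uniq h2 h1 (h.swap h1 h2 hx) (h.swap h1 h2 hy)
  have l1 := hx.2.1
  rw [a, b] at l1
  exact h.uniq l1 hy.2.1

/-- `x2 * z * y1` lies below `c`. -/
theorem Ctx.mixc (h : Ctx c I1 I2) {x2 y1 : A} (z : A) (h2 : x2 ∈ I2) (k1 : y1 ∈ I1) :
    x2 * z * y1 * c = x2 * z * y1 := by
  obtain ⟨z1, m1, z2, m2, hz⟩ := h.hdp.2.2.2.2.2.2 z
  have l := h.hdp.2.1 z x2 z1 m1 z2 m2 (by rw [hz.2.2.2.2]; exact h.idem _) z hz.2.1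
  have l' := (h.hdp.2.1 (x2 * z) y1 z1 m1 z2 m2 (by
    rw [hz.2.2.2.2, mul_assoc]; exact h.mulle _ _) (x2 * z) l.2).1
  refine h.lub_c l' ?_ ?_
  · have p := h.symm.prodc h2 m1
    calc x2 * z * z1 * y1 * c = x2 * (z * z1) * y1 * c := by simp only [mul_assoc]
      _ = (x2 * z1) * z * y1 * c := by rw [hz.1.1]; simp only [mul_assoc]
      _ = (x2 * z1 * c) * z * y1 := by simp only [mul_assoc, h.hc]
      _ = x2 * z * z1 * y1 := by rw [p, mul_assoc x2, ← hz.1.1]; simp only [mul_assoc]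
  · have p := h.symm.prodc m2 k1
    rw [mul_assoc _ z2, mul_assoc _ _ c, p]

/-- `z * x1 * z1 = x1 * z * z1`. -/
theorem Ctx.exch (h : Ctx c I1 I2) {x1 z1 z2 z : A} (h1 : x1 ∈ I1) (m1 : z1 ∈ I1)
    (m2 : z2 ∈ I2) (hz : IsPair c z1 z2 z) : z * x1 * z1 = x1 * z * z1 := by
  have l := h.m2l m1 m2 hz (z * x1)
  rw [h.rrb] at l
  refine h.left l ?_
  have p := hz.2.2.2.2
  have q := h.hdp.1 _ h1 _ m2
  have q' := h.hdp.1 _ m1 _ m2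
  have e : z * x1 * c * z1 = x1 * z * z1 * c := by
    calc z * x1 * c * z1 = (z * c) * x1 * z1 := by simp only [mul_assoc, h.hc]
      _ = z2 * (z1 * x1 * z1) := by rw [← p, q']; simp only [mul_assoc]
      _ = x1 * (z2 * z1) := by rw [h.rrb, ← mul_assoc, ← q, mul_assoc]
      _ = x1 * (z2 * z1 * z1) := by rw [mul_assoc z2, h.idem]
      _ = x1 * z * z1 * c := by rw [← q', p]; simp only [mul_assoc, h.hc]
  rw [e]
  exact h.cle _

section hom
variable {x1 x2 x z1 z2 z : A}

theorem Ctx.zc (h : Ctx c I1 I2) (k1 : z1 ∈ I1) (k2 : z2 ∈ I2) (hz : IsPair c z1 z2 z) :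
    z * z1 * c = z * c := by
  rw [hz.1.1, mul_assoc, ← hz.2.2.2.2, ← mul_assoc, h.idem]

/-- `x * x1 * z = x * x1 * z * z1`. -/
theorem Ctx.absorb (h : Ctx c I1 I2) (h1 : x1 ∈ I1) (h2 : x2 ∈ I2) (k1 : z1 ∈ I1) (k2 : z2 ∈ I2)
    (hz : IsPair c z1 z2 z) :
    x * x1 * z = x * x1 * z * z1 := by
  have l := h.m1l k1 k2 hz (x * x1)
  refine h.left l ?_
  have m := h.symm.mixc z h1 k2
  have a := h.zc k1 k2 hz
  have b := h.symm.zc k2 k1 (h.swap k1 k2 hz)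
  have e : x * x1 * z * z2 = x * x1 * z * z1 * c := by
    calc x * x1 * z * z2 = x * (x1 * z * z2 * c) := by rw [m]; simp only [mul_assoc]
      _ = x * x1 * (z * z2 * c) := by simp only [mul_assoc]
      _ = x * x1 * (z * z1 * c) := by rw [b, a]
      _ = _ := by simp only [mul_assoc]
  rw [e]
  exact h.cle _

theorem Ctx.xzw (h : Ctx c I1 I2) (h1 : x1 ∈ I1) (h2 : x2 ∈ I2) (k1 : z1 ∈ I1) (k2 : z2 ∈ I2)
    (hz : IsPair c z1 z2 z) : x * z * (x1 * z1) = x * x1 * z := by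
  rw [h.absorb h1 h2 k1 k2 hz, mul_assoc x, ← mul_assoc z, h.exch h1 k1 k2 hz]
  simp only [mul_assoc]

theorem Ctx.wxz (h : Ctx c I1 I2) (h1 : x1 ∈ I1) (h2 : x2 ∈ I2) (k1 : z1 ∈ I1) (k2 : z2 ∈ I2)
    (hx : IsPair c x1 x2 x) (hz : IsPair c z1 z2 z) : x1 * z1 * (x * z) = x * x1 * z := by
  have l := h.m1l k1 k2 hz (x1 * z1 * x)
  have a := h.zc k1 k2 hz
  have b := h.symm.zc k2 k1 (h.swap k1 k2 hz)
  have e : x1 * z1 * x * z * z1 = x * x1 * z := by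
    rw [h.absorb h1 h2 k1 k2 hz, mul_assoc _ z, mul_assoc _ z, hz.1.1, ← mul_assoc, ← mul_assoc,
      mul_assoc x1, mul_assoc x1, h.rrb, ← mul_assoc, hx.1.1]
  have m := h.symm.mixc x k1 k2
  have e2 : x1 * z1 * x * z * z2 = x1 * z1 * x * z * z1 * c := by
    calc x1 * z1 * x * z * z2 = x1 * (z1 * x * z2) * z := by
          rw [mul_assoc _ z, hz.1.2]; simp only [mul_assoc]
      _ = x1 * (z1 * x * z2 * c) * z := by rw [m]
      _ = x1 * z1 * x * (z2 * z * c) := by simp only [mul_assoc, h.hc]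
      _ = x1 * z1 * x * (z * z1 * c) := by rw [← hz.1.2, b, a]
      _ = _ := by simp only [mul_assoc]
  have r := h.left l (by rw [e2]; exact h.cle _)
  rw [← e, ← r]
  simp only [mul_assoc]

theorem Ctx.p1 (h : Ctx c I1 I2) (h1 : x1 ∈ I1) (h2 : x2 ∈ I2) (k1 : z1 ∈ I1) (k2 : z2 ∈ I2)
    (hx : IsPair c x1 x2 x) (hz : IsPair c z1 z2 z) :
    IsLub2 (x * z * (x1 * z1)) (c * (x1 * z1)) (x1 * z1) := by
  have l1 := h.m2r h1 h2 hx z1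
  have l2 := h.m2l k1 k2 hz (x * x1)
  rw [h.xzw h1 h2 k1 k2 hz, h.absorb h1 h2 k1 k2 hz, ← mul_assoc c]
  refine ⟨h.trans l2.1 l1.1, l1.2.1, fun t ht1 ht2 => l1.2.2 t (l2.2.2 t ht1 ?_) ht2⟩
  refine h.trans ?_ ht2
  have : x * x1 * c * z1 = x * (c * x1 * z1) := by simp only [mul_assoc, h.hc]
  rw [this]
  exact h.mulle _ _

theorem Ctx.hom (h : Ctx c I1 I2) (h1 : x1 ∈ I1) (h2 : x2 ∈ I2) (k1 : z1 ∈ I1) (k2 : z2 ∈ I2)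
    (hx : IsPair c x1 x2 x) (hz : IsPair c z1 z2 z) :
    IsPair c (x1 * z1) (x2 * z2) (x * z) := by
  have hx' := h.swap h1 h2 hx
  have hz' := h.swap k1 k2 hz
  have a := h.xzw (x := x) h1 h2 k1 k2 hz
  have b := h.symm.xzw (x := x) h2 h1 k2 k1 hz'
  refine ⟨⟨?_, ?_⟩, ?_, h.p1 h1 h2 k1 k2 hx hz, h.symm.p1 h2 h1 k2 k1 hx' hz', ?_⟩
  · rw [a, h.wxz h1 h2 k1 k2 hx hz]
  · rw [b, h.symm.wxz h2 h1 k2 k1 hx' hz']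
  · rw [a, b]
    exact h.m1r h1 h2 hx z
  · rw [h.mulc, ← hx.2.2.2.2, ← hz.2.2.2.2, mul_assoc, ← mul_assoc z1, h.hdp.1 _ k1 _ h2]
    simp only [mul_assoc]

end hom
end

end RRBFactor

open RRBFactor

/-- If `A = I1 ×_c I2` for a central element `c` of a right regular band `A`
and subsemigroups `I1`, `I2`, then `x = ⟨⟨x1,x2⟩⟩_c` defines a semigroup
isomorphism between the direct product `I1 × I2` (with componentwise
multiplication) and `A`. -/
theorem rrb_representation_iso {A : Type*} [Semigroup A]
    (idem : ∀ x : A, x * x = x) (rrb : ∀ a b : A, a * b * a = b * a)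
    (c : A) (hc : ∀ x : A, c * x = x * c)
    (I1 I2 : Subsemigroup A)
    (hdp : CDirect c (I1 : Set A) (I2 : Set A)) :
    ∃ Φ : ↥I1 × ↥I2 → A,
      Function.Bijective Φ ∧
      (∀ (p : ↥I1 × ↥I2) (x : A), Φ p = x ↔ IsPair c (p.1 : A) (p.2 : A) x) ∧
      (∀ p q : ↥I1 × ↥I2, Φ (p * q) = Φ p * Φ q) := by
  have h : Ctx c I1 I2 := ⟨idem, rrb, hc, hdp⟩
  choose Φ hΦ using fun p : ↥I1 × ↥I2 => hdp.2.2.2.2.2.1 p.1 p.1.2 p.2 p.2.2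
  have hiff : ∀ (p : ↥I1 × ↥I2) (x : A), Φ p = x ↔ IsPair c (p.1 : A) (p.2 : A) x := by
    intro p x
    constructor
    · rintro rfl
      exact hΦ p
    · intro hx
      exact h.uniq_pair p.1.2 p.2.2 (hΦ p) hx
  refine ⟨Φ, ⟨?_, ?_⟩, hiff, ?_⟩
  · intro p q hpq
    have hp := hΦ p
    have hq := hΦ q
    rw [← hpq] at hq
    apply Prod.ext
    · exact Subtype.ext (h.fst_uniq p.1.2 p.2.2 q.1.2 q.2.2 hp hq)
    · exact Subtype.ext (h.symm.fst_uniq p.2.2 p.1.2 q.2.2 q.1.2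
        (h.swap p.1.2 p.2.2 hp) (h.swap q.1.2 q.2.2 hq))
  · intro x
    obtain ⟨x1, h1, x2, h2, hx⟩ := hdp.2.2.2.2.2.2 x
    exact ⟨(⟨x1, h1⟩, ⟨x2, h2⟩), (hiff _ _).2 hx⟩
  · intro p q
    exact (hiff _ _).2 (h.hom p.1.2 p.2.2 q.1.2 q.2.2 (hΦ p) (hΦ q))
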